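/- Let d ≥ 2 be an integer, let c > 0 and U ≥ 0, and set μ₀ = (d+1)U/c. For μ ≥ 0 let Y_μ denote a Poisson random variable with mean μ. Then for every μ ≥ 0, U·P(Y_μ ≤ d−1) + (dc/(d+1))·P(Y_μ ≥ d+1) ≥ U·P(Y_{μ₀} ≤ d−1) + (dc/(d+1))·P(Y_{μ₀} ≥ d+1); that is, the function μ ↦ U·P(Y_μ < d) + (dc/(d+1))·P(Y_μ > d) is minimized over μ ≥ 0 at μ = (d+1)U/c. -/

import Mathlib

/-- Probability that a Poisson random variable with mean `μ` equals `i`. -/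
noncomputable def poisProb (μ : ℝ) (i : ℕ) : ℝ :=
  Real.exp (-μ) * μ ^ i / (Nat.factorial i)

/-!
Since `i * P(Y_μ = i) = μ * P(Y_μ = i - 1)`, the derivative in `μ` of `P(Y_μ < n)` telescopes to
`-(n / μ) * P(Y_μ = n)`, and `P(Y_μ > d) = 1 - P(Y_μ < d + 1)`. Hence
`a * P(Y_μ < d) + b * P(Y_μ > d)` has derivative `(b / μ) * P(Y_μ = d) * (μ - d * a / b)`, which
changes sign from negative to positive at `μ = d * a / b`. The weights `a = U` and
`b = d * c / (d + 1)` put this point at `(d + 1) * U / c`.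
-/

open Finset (range sum_range_succ)

lemma tsum_ite_le_eq_sub_sum_range {α : Type*} [AddCommGroup α] [TopologicalSpace α]
    [IsTopologicalAddGroup α] [T2Space α] {f : ℕ → α} {s : α} (hf : HasSum f s) (n : ℕ) :
    (∑' i, if n ≤ i then f i else 0) = s - ∑ i ∈ range n, f i := by
  have hcompl : {i | n ≤ i} = (range n : Set ℕ)ᶜ := by ext i; simp
  rw [eq_sub_iff_add_eq', ← hf.tsum_eq, ← hf.summable.sum_add_tsum_compl (s := range n),
    tsum_subtype, ← hcompl]
  simp only [Set.indicator_apply, Set.mem_ofPred_eq]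

lemma poisProb_nonneg {μ : ℝ} (hμ : 0 ≤ μ) (n : ℕ) : 0 ≤ poisProb μ n := by
  unfold poisProb
  positivity

lemma hasSum_poisProb (μ : ℝ) : HasSum (poisProb μ) 1 := by
  have h := (NormedSpace.expSeries_div_hasSum_exp μ).mul_left (Real.exp (-μ))
  rw [← Real.exp_eq_exp_ℝ, ← Real.exp_add, neg_add_cancel, Real.exp_zero] at h
  simp only [← mul_div_assoc] at h
  exact h

lemma succ_mul_poisProb_succ (μ : ℝ) (n : ℕ) :
    ((n : ℝ) + 1) * poisProb μ (n + 1) = μ * poisProb μ n := by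
  simp only [poisProb, Nat.factorial_succ, Nat.cast_mul, Nat.cast_add_one]
  field_simp
  ring

lemma continuous_poisProb (n : ℕ) : Continuous fun μ ↦ poisProb μ n := by
  unfold poisProb
  fun_prop

lemma hasDerivAt_poisProb {μ : ℝ} (hμ : μ ≠ 0) (n : ℕ) :
    HasDerivAt (fun x ↦ poisProb x n) ((n / μ - 1) * poisProb μ n) μ := by
  have hpow : HasDerivAt (fun x : ℝ ↦ x ^ n) (n / μ * μ ^ n) μ := by
    refine (hasDerivAt_pow n μ).congr_deriv ?_
    cases n with
    | zero => simp
    | succ n => rw [Nat.add_sub_cancel, pow_succ]; field_simp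
  refine (((hasDerivAt_neg μ).exp.mul hpow).div_const (n.factorial : ℝ)).congr_deriv ?_
  unfold poisProb
  ring

lemma hasDerivAt_sum_range_poisProb {μ : ℝ} (hμ : μ ≠ 0) (n : ℕ) :
    HasDerivAt (fun x ↦ ∑ i ∈ range n, poisProb x i) (-(n / μ * poisProb μ n)) μ := by
  induction n with
  | zero => simpa using hasDerivAt_const μ (0 : ℝ)
  | succ n ih =>
    have hsucc : ((n + 1 : ℕ) : ℝ) / μ * poisProb μ (n + 1) = poisProb μ n := by
      rw [div_mul_eq_mul_div, Nat.cast_add_one, succ_mul_poisProb_succ, mul_div_cancel_left₀ _ hμ]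
    simp only [sum_range_succ]
    refine (ih.add (hasDerivAt_poisProb hμ n)).congr_deriv ?_
    rw [hsucc]
    ring

/-- The weighted Poisson tail sum `a * P(Y_μ < d) + b * P(Y_μ > d)`, the function of the mean `μ`
to be minimized, with arbitrary weights `a` and `b`. As for `poisProb`, `μ` ranges over all of `ℝ`
although only `0 ≤ μ` has a probabilistic meaning. -/
noncomputable def weightedPoisTails (a b : ℝ) (d : ℕ) (μ : ℝ) : ℝ :=
  a * (∑ i ∈ range d, poisProb μ i) + b * (∑' i : ℕ, if d + 1 ≤ i then poisProb μ i else 0)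

section weightedPoisTails

variable (a b : ℝ) (d : ℕ)

lemma weightedPoisTails_eq_sum_range (μ : ℝ) :
    weightedPoisTails a b d μ =
      a * (∑ i ∈ range d, poisProb μ i) + b * (1 - ∑ i ∈ range (d + 1), poisProb μ i) := by
  rw [weightedPoisTails, tsum_ite_le_eq_sub_sum_range (hasSum_poisProb μ)]

lemma continuous_weightedPoisTails : Continuous (weightedPoisTails a b d) := by
  have hsum (n : ℕ) : Continuous fun μ ↦ ∑ i ∈ range n, poisProb μ i :=
    continuous_finsetSum _ fun i _ ↦ continuous_poisProb i
  rw [funext (weightedPoisTails_eq_sum_range a b d)]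
  exact ((hsum d).const_mul a).add ((continuous_const.sub (hsum (d + 1))).const_mul b)

lemma hasDerivAt_weightedPoisTails {μ : ℝ} (hμ : μ ≠ 0) :
    HasDerivAt (weightedPoisTails a b d) (poisProb μ d / μ * (b * μ - d * a)) μ := by
  rw [funext (weightedPoisTails_eq_sum_range a b d)]
  refine (((hasDerivAt_sum_range_poisProb hμ d).const_mul a).add
    (((hasDerivAt_sum_range_poisProb hμ (d + 1)).const_sub 1).const_mul b)).congr_deriv ?_
  have hsucc := succ_mul_poisProb_succ μ d
  push_cast
  field_simp
  linear_combination b * hsucc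

end weightedPoisTails

theorem stmt10_general {a b : ℝ} (ha : 0 ≤ a) (hb : 0 < b) (d : ℕ) :
    IsMinOn (weightedPoisTails a b d) (Set.Ici 0) (d * a / b) := by
  have hnonneg : 0 ≤ d * a / b := by positivity
  have hderiv {x : ℝ} (hx : 0 < x) := hasDerivAt_weightedPoisTails a b d hx.ne'
  have hfactor {x : ℝ} (hx : 0 < x) : 0 ≤ poisProb x d / x :=
    div_nonneg (poisProb_nonneg hx.le d) hx.le
  have hcont := continuous_weightedPoisTails a b d
  refine isMinOn_Ici_of_deriv hcont.continuousAt hcont.continuousAt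
    (fun x hx ↦ (hderiv hx.1).differentiableAt.differentiableWithinAt)
    (fun x hx ↦ (hderiv (hnonneg.trans_lt hx)).differentiableAt.differentiableWithinAt)
    (fun x hx ↦ ?_) (fun x hx ↦ ?_)
  · rw [(hderiv hx.1).deriv]
    have hlt : b * x < d * a := (lt_div_iff₀' hb).mp hx.2
    exact mul_nonpos_of_nonneg_of_nonpos (hfactor hx.1) (sub_nonpos.mpr hlt.le)
  · have hx0 : 0 < x := hnonneg.trans_lt hx
    rw [(hderiv hx0).deriv]
    have hlt : d * a < b * x := (div_lt_iff₀' hb).mp hx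
    exact mul_nonneg (hfactor hx0) (sub_nonneg.mpr hlt.le)

/-- Let `d ≥ 2`, `c > 0`, `U ≥ 0`, and `μ₀ = (d+1)U/c`.  For a Poisson random
variable `Y_μ` with mean `μ`, the function
`μ ↦ U·P(Y_μ ≤ d−1) + (dc/(d+1))·P(Y_μ ≥ d+1)` is minimized over `μ ≥ 0` at
`μ = μ₀`. -/
theorem stmt10 (d : ℕ) (hd : 2 ≤ d) (c U : ℝ) (hc : 0 < c) (hU : 0 ≤ U)
    (μ : ℝ) (hμ : 0 ≤ μ) :
    U * (∑ i ∈ Finset.range d, poisProb (((d : ℝ) + 1) * U / c) i)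
        + ((d : ℝ) * c / ((d : ℝ) + 1))
          * (∑' i : ℕ, if d + 1 ≤ i then poisProb (((d : ℝ) + 1) * U / c) i else 0)
      ≤ U * (∑ i ∈ Finset.range d, poisProb μ i)
          + ((d : ℝ) * c / ((d : ℝ) + 1))
            * (∑' i : ℕ, if d + 1 ≤ i then poisProb μ i else 0) := by
  have hd0 : (0 : ℝ) < d := by exact_mod_cast two_pos.trans_le hd
  have hweight : 0 < (d : ℝ) * c / (d + 1) := div_pos (mul_pos hd0 hc) (by positivity)
  have hminimizer : ((d : ℝ) + 1) * U / c = d * U / (d * c / (d + 1)) := by field_simp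
  rw [hminimizer]
  exact stmt10_general hU hweight d hμ
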